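/- Let M > 0. For all R > 0 and t > 0, there exist constants 0 < c_R < 1 and 1 < m₀(t,R) < ∞ (with c_R depending on R, M, d, α, ν but not on t or m) such that for all m ≥ m₀: ∫_{B(0,R)} p_s(x−y) dy ≥ c_R for every pair (s,x) with t/(2m) ≤ s ≤ t/m and x ∈ B(0, R + M (t/m)^{1/α}). -/

import Mathlib

open MeasureTheory Real
open scoped RealInnerProductSpace

/-- The heat kernel of the fractional Laplacian `-ν(-Δ)^(α/2)` on `ℝ^d`:
`p_t(x) = (2π)^{-d} ∫ e^{-i x·z} e^{-tν|z|^α} dz`. -/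
noncomputable def stableKernel (d : ℕ) (ν α t : ℝ) (x : EuclideanSpace ℝ (Fin d)) : ℝ :=
  ((2 * Real.pi) ^ d)⁻¹ *
    (∫ z : EuclideanSpace ℝ (Fin d),
      Complex.exp (-(Complex.I * (⟪x, z⟫ : ℝ))) *
        Complex.exp (-((t * ν * ‖z‖ ^ α : ℝ) : ℂ))).re


/-!
By scaling, `p_s(x) = ρ⁻ᵈ p_1(x / ρ)` with `ρ = s^{1/α}`. If `ρ ≤ R` and `‖x‖ ≤ R + K ρ`, then
`B(0, R)` contains a ball of radius `ρ` all of whose points are within `(K + 2) ρ` of `x`; on that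
ball `p_s(x - ·)` is at least `ρ⁻ᵈ` times the minimum of `p_1` over a fixed compact ball.

What remains is that `p_1` is strictly positive. For `0 < b ≤ 1` the function `1 - (1 - w)^b` has a
power series with nonnegative coefficients, and `(1 - (1 - e^{-δ u})^b)^n → e^{-ν u^b}` for
`δ = (ν / n)^{1/b}`. With `u = ‖z‖²` and `b = α / 2` this exhibits `e^{-ν‖z‖^α}` as a limit of
positive combinations of Gaussians. The Fourier transform `T` of a Gaussian is nonnegative and
log-convex in `‖x‖²`, and both properties survive sums and limits. Hence
`T(x / √2)² ≤ T(0) T(x)`, which carries the positivity of `T` near `0` to all of space.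
-/

section

open Filter Topology

/-- The probability generating function `w ↦ 1 - (1 - w)^b` of the Sibuya distribution of
parameter `b`, whose `n`-fold sums, rescaled, converge to the positive `b`-stable law. -/
noncomputable def sibuyaPGF (b w : ℝ) : ℝ := 1 - (1 - w) ^ b

lemma sibuyaPGF_nonneg {b w : ℝ} (hb : 0 ≤ b) (hw₀ : 0 ≤ w) (hw₁ : w ≤ 1) : 0 ≤ sibuyaPGF b w :=
  sub_nonneg.2 (rpow_le_one (sub_nonneg.2 hw₁) (sub_le_self _ hw₀) hb)

lemma sibuyaPGF_le_one {b w : ℝ} (hw : w ≤ 1) : sibuyaPGF b w ≤ 1 :=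
  sub_le_self _ (rpow_nonneg (sub_nonneg.2 hw) b)

lemma norm_sibuyaPGF_pow_le_one {b w : ℝ} (hb : 0 ≤ b) (hw₀ : 0 ≤ w) (hw₁ : w ≤ 1) (n : ℕ) :
    ‖sibuyaPGF b w ^ n‖ ≤ 1 := by
  have hpgf := sibuyaPGF_nonneg hb hw₀ hw₁
  rw [norm_of_nonneg (pow_nonneg hpgf n)]
  exact pow_le_one₀ hpgf (sibuyaPGF_le_one hw₁)

lemma neg_one_pow_mul_choose_succ_nonneg {b : ℝ} (hb₀ : 0 ≤ b) (hb₁ : b ≤ 1) (k : ℕ) :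
    0 ≤ (-1) ^ k * Ring.choose b (k + 1) := by
  induction k with
  | zero => simpa using hb₀
  | succ k ih =>
    have recursion : (k + 2 : ℝ) * Ring.choose b (k + 2) =
        Ring.choose b (k + 1) * (b - (k + 1)) := by
      have absorption := Ring.choose_smul_choose b (Nat.le_succ (k + 1))
      rw [Nat.succ_eq_add_one, Nat.choose_succ_self_right] at absorption
      simpa [add_assoc, one_add_one_eq_two] using absorption
    refine (mul_nonneg_iff_of_pos_left (by positivity : 0 < (k + 2 : ℝ))).1 ?_
    calc 0 ≤ (k + 1 - b) * ((-1) ^ k * Ring.choose b (k + 1)) :=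
          mul_nonneg (by linarith [k.cast_nonneg (α := ℝ)]) ih
      _ = _ := by linear_combination -(-1) ^ (k + 1) * recursion

lemma hasSum_sibuyaPGF (b : ℝ) {w : ℝ} (hw : |w| < 1) :
    HasSum (fun k : ℕ => (-1) ^ k * Ring.choose b (k + 1) * w ^ (k + 1)) (sibuyaPGF b w) := by
  have hsum : HasSum (fun k : ℕ => Ring.choose b k * (-w) ^ k) ((1 - w) ^ b) := by
    simpa [-FormalMultilinearSeries.apply_eq_prod_smul_coeff, binomialSeries_apply,
      sub_eq_add_neg] using (one_add_rpow_hasFPowerSeriesOnBall_zero (a := b)).hasSum (y := -w)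
        (by simpa [← ofReal_norm] using hw)
  have htail := ((hasSum_nat_add_iff' 1).2 hsum).neg
  have value_eq : -((1 - w) ^ b - ∑ k ∈ Finset.range 1, Ring.choose b k * (-w) ^ k) =
      sibuyaPGF b w := by
    simp [sibuyaPGF]
  rw [value_eq] at htail
  refine htail.congr_fun fun k => ?_
  rw [neg_pow w]
  ring

lemma tendsto_sibuyaPGF_exp_pow {b ν u : ℝ} (hb : 0 < b) (hν : 0 < ν) (hu : 0 ≤ u) :
    Tendsto (fun n : ℕ => sibuyaPGF b (exp (-(ν / n) ^ (1 / b) * u)) ^ n) atTop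
      (𝓝 (exp (-ν * u ^ b))) := by
  set δ : ℕ → ℝ := fun n => (ν / n) ^ (1 / b)
  have δ_pos : ∀ᶠ n in atTop, 0 < δ n := by
    filter_upwards [eventually_gt_atTop 0] with n hn
    positivity
  have δ_tendsto : Tendsto δ atTop (𝓝[≠] 0) := by
    refine tendsto_nhdsWithin_iff.2 ⟨?_, δ_pos.mono fun n hn => hn.ne'⟩
    simpa [δ, hb.ne'] using (tendsto_const_div_atTop_nhds_zero_nat ν).rpow_const
      (p := 1 / b) (Or.inr (by positivity))
  have slope_tendsto : Tendsto (fun n => (1 - exp (-δ n * u)) / δ n) atTop (𝓝 u) := by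
    have hderiv : HasDerivAt (fun r : ℝ => 1 - exp (-r * u)) u 0 := by
      simpa using! (((hasDerivAt_id (0 : ℝ)).neg.mul_const u).exp).const_sub 1
    refine (hderiv.tendsto_slope_zero.comp δ_tendsto).congr fun n => ?_
    simp [div_eq_inv_mul]
  have scaled_tendsto :
      Tendsto (fun n : ℕ => n * -(1 - exp (-δ n * u)) ^ b) atTop (𝓝 (-ν * u ^ b)) := by
    refine ((slope_tendsto.rpow_const (Or.inr hb.le)).const_mul (-ν)).congr' ?_
    filter_upwards [eventually_gt_atTop 0, δ_pos] with n hn hδ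
    have hexp : exp (-δ n * u) ≤ 1 := exp_le_one_iff.2 (by nlinarith)
    have δ_rpow : δ n ^ b = ν / n := by
      rw [← rpow_mul (by positivity), one_div_mul_cancel hb.ne', rpow_one]
    rw [div_rpow (sub_nonneg.2 hexp) hδ.le, δ_rpow]
    field_simp
  simpa only [sibuyaPGF, sub_eq_add_neg] using tendsto_one_add_pow_exp_of_tendsto scaled_tendsto

lemma exp_neg_mul_sq_le_one {δ : ℝ} (hδ : 0 ≤ δ) (r : ℝ) : exp (-δ * r ^ 2) ≤ 1 :=
  exp_le_one_iff.2 (by nlinarith [sq_nonneg r])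

variable {E : Type*} [NormedAddCommGroup E] [InnerProductSpace ℝ E]

lemma norm_cos_inner_mul_le (g : E → ℝ) (x z : E) : ‖cos ⟪x, z⟫ * g z‖ ≤ ‖g z‖ := by
  rw [norm_mul]
  exact mul_le_of_le_one_left (norm_nonneg _) (abs_cos_le_one _)

variable [FiniteDimensional ℝ E] [MeasurableSpace E] [BorelSpace E]

lemma integrable_exp_neg_mul_norm_rpow {ν α : ℝ} (hν : 0 < ν) (hα : 0 < α) :
    Integrable (fun z : E => exp (-ν * ‖z‖ ^ α)) := by
  cases subsingleton_or_nontrivial E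
  · exact .of_finite
  · rw [integrable_fun_norm_addHaar volume (f := fun r : ℝ => exp (-ν * r ^ α))]
    have hrank : (-1 : ℝ) < (Module.finrank ℝ E - 1 : ℕ) := neg_one_lt_zero.trans_le (by positivity)
    simpa only [smul_eq_mul, rpow_natCast] using integrableOn_rpow_mul_exp_neg_mul_rpow hrank hα hν

lemma integrable_exp_neg_mul_norm_sq {ε : ℝ} (hε : 0 < ε) :
    Integrable (fun z : E => exp (-ε * ‖z‖ ^ 2)) := by
  simpa only [rpow_two] using integrable_exp_neg_mul_norm_rpow (E := E) hε two_pos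

/-- The cosine transform `x ↦ ∫ cos ⟪x, z⟫ g(z) dz`: for even real-valued `g`, this is the Fourier
transform in the angular-frequency normalization. -/
noncomputable def cosTransform (g : E → ℝ) (x : E) : ℝ := ∫ z, cos ⟪x, z⟫ * g z

lemma aestronglyMeasurable_cos_inner_mul {g : E → ℝ} (hg : AEStronglyMeasurable g) (x : E) :
    AEStronglyMeasurable (fun z => cos ⟪x, z⟫ * g z) :=
  (by fun_prop : Continuous fun z : E => cos ⟪x, z⟫).aestronglyMeasurable.mul hg

lemma integrable_cos_inner_mul {g : E → ℝ} (hg : Integrable g) (x : E) :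
    Integrable (fun z => cos ⟪x, z⟫ * g z) :=
  hg.mono (aestronglyMeasurable_cos_inner_mul hg.1 x) (.of_forall (norm_cos_inner_mul_le g x))

lemma continuous_cosTransform {g : E → ℝ} (hg : Integrable g) : Continuous (cosTransform g) :=
  continuous_of_dominated (aestronglyMeasurable_cos_inner_mul hg.1)
    (fun x => .of_forall (norm_cos_inner_mul_le g x)) hg.norm
    (.of_forall fun z => by fun_prop)

lemma cosTransform_const_mul (c : ℝ) (g : E → ℝ) (x : E) :
    cosTransform (fun z => c * g z) x = c * cosTransform g x := by
  simp only [cosTransform, mul_left_comm _ c, integral_const_mul]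

lemma cosTransform_sum {ι : Type*} {s : Finset ι} {g : ι → E → ℝ}
    (hg : ∀ i ∈ s, Integrable (g i)) (x : E) :
    cosTransform (fun z => ∑ i ∈ s, g i z) x = ∑ i ∈ s, cosTransform (g i) x := by
  simp only [cosTransform, Finset.mul_sum]
  exact integral_finsetSum s fun i hi => integrable_cos_inner_mul (hg i hi) x

lemma tendsto_cosTransform {g : ℕ → E → ℝ} {f G : E → ℝ}
    (hg : ∀ n, AEStronglyMeasurable (g n)) (hG : Integrable G)
    (hbound : ∀ n, ∀ᵐ z, ‖g n z‖ ≤ G z)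
    (hlim : ∀ᵐ z, Tendsto (fun n => g n z) atTop (𝓝 (f z))) (x : E) :
    Tendsto (fun n => cosTransform (g n) x) atTop (𝓝 (cosTransform f x)) :=
  tendsto_integral_of_dominated_convergence G
    (fun n => aestronglyMeasurable_cos_inner_mul (hg n) x) hG
    (fun n => (hbound n).mono fun z hz => (norm_cos_inner_mul_le (g n) x z).trans hz)
    (hlim.mono fun _ hz => hz.const_mul _)

lemma cosTransform_gaussian {ε : ℝ} (hε : 0 < ε) (x : E) :
    cosTransform (fun z => exp (-ε * ‖z‖ ^ 2)) x =
      (π / ε) ^ (Module.finrank ℝ E / 2 : ℝ) * exp (-‖x‖ ^ 2 / (4 * ε)) := by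
  have hε' : 0 < (ε : ℂ).re := hε
  have re_integrand (z : E) : (Complex.exp (-ε * ‖z‖ ^ 2 + Complex.I * ⟪x, z⟫)).re =
      cos ⟪x, z⟫ * exp (-ε * ‖z‖ ^ 2) := by
    simp [Complex.exp_re, ← Complex.ofReal_pow, mul_comm]
  have re_integral := integral_re
    (GaussianFourier.integrable_cexp_neg_mul_sq_norm_add hε' Complex.I x)
  simp only [RCLike.re_to_complex, re_integrand,
    GaussianFourier.integral_cexp_neg_mul_sq_norm_add hε'] at re_integral
  rw [cosTransform, re_integral, ← Complex.ofReal_re (_ * _)]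
  push_cast [Complex.ofReal_cpow (div_pos pi_pos hε).le]
  simp

/-- An integrable function whose cosine transform is nonnegative and midpoint log-convex as a
function of `‖x‖²`, as is the case for positive combinations of centred Gaussians. -/
structure HasLogConvexCosTransform (g : E → ℝ) : Prop where
  integrable : Integrable g
  nonneg : ∀ x, 0 ≤ cosTransform g x
  sq_le : ∀ x y z, ‖x‖ ^ 2 + ‖y‖ ^ 2 = 2 * ‖z‖ ^ 2 →
    cosTransform g z ^ 2 ≤ cosTransform g x * cosTransform g y

namespace HasLogConvexCosTransform

lemma gaussian {ε : ℝ} (hε : 0 < ε) :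
    HasLogConvexCosTransform fun z : E => exp (-ε * ‖z‖ ^ 2) where
  integrable := integrable_exp_neg_mul_norm_sq hε
  nonneg x := by
    rw [cosTransform_gaussian hε]
    positivity
  sq_le x y z hxyz := by
    simp only [cosTransform_gaussian hε]
    have exp_sq : exp (-‖z‖ ^ 2 / (4 * ε)) ^ 2 =
        exp (-‖x‖ ^ 2 / (4 * ε)) * exp (-‖y‖ ^ 2 / (4 * ε)) := by
      rw [← exp_nat_mul, ← exp_add]
      congr 1
      push_cast
      linear_combination hxyz / (4 * ε)
    rw [mul_pow, exp_sq]
    exact le_of_eq (by ring)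

lemma const_mul {g : E → ℝ} (hg : HasLogConvexCosTransform g) {c : ℝ} (hc : 0 ≤ c) :
    HasLogConvexCosTransform fun z => c * g z where
  integrable := hg.integrable.const_mul c
  nonneg x := by
    rw [cosTransform_const_mul]
    exact mul_nonneg hc (hg.nonneg x)
  sq_le x y z hxyz := by
    simp only [cosTransform_const_mul]
    calc (c * cosTransform g z) ^ 2 = c ^ 2 * cosTransform g z ^ 2 := mul_pow _ _ _
      _ ≤ c ^ 2 * (cosTransform g x * cosTransform g y) := by
        gcongr
        exact hg.sq_le x y z hxyz
      _ = _ := by ring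

lemma sum {ι : Type*} {s : Finset ι} {g : ι → E → ℝ}
    (hg : ∀ i ∈ s, HasLogConvexCosTransform (g i)) :
    HasLogConvexCosTransform fun z => ∑ i ∈ s, g i z where
  integrable := integrable_finsetSum s fun i hi => (hg i hi).integrable
  nonneg x := by
    rw [cosTransform_sum fun i hi => (hg i hi).integrable]
    exact Finset.sum_nonneg fun i hi => (hg i hi).nonneg x
  sq_le x y z hxyz := by
    simp only [cosTransform_sum fun i hi => (hg i hi).integrable]
    exact Finset.sum_sq_le_sum_mul_sum_of_sq_le_mul s (fun i hi => (hg i hi).nonneg x)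
      (fun i hi => (hg i hi).nonneg y) fun i hi => (hg i hi).sq_le x y z hxyz

lemma of_tendsto {g : ℕ → E → ℝ} {f G : E → ℝ} (hg : ∀ n, HasLogConvexCosTransform (g n))
    (hG : Integrable G) (hbound : ∀ n, ∀ᵐ z, ‖g n z‖ ≤ G z)
    (hlim : ∀ᵐ z, Tendsto (fun n => g n z) atTop (𝓝 (f z))) :
    HasLogConvexCosTransform f := by
  have hmeas n : AEStronglyMeasurable (g n) := (hg n).integrable.1
  have htend := tendsto_cosTransform hmeas hG hbound hlim
  refine ⟨hG.mono' (aestronglyMeasurable_of_tendsto_ae atTop hmeas hlim) ?_,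
    fun x => ge_of_tendsto' (htend x) fun n => (hg n).nonneg x,
    fun x y z hxyz => le_of_tendsto_of_tendsto' ((htend z).pow 2) ((htend x).mul (htend y))
      fun n => (hg n).sq_le x y z hxyz⟩
  filter_upwards [ae_all_iff.2 hbound, hlim] with z hz hlim
  exact le_of_tendsto' hlim.norm hz

lemma cosTransform_pos {g : E → ℝ} (hg : HasLogConvexCosTransform g) (h₀ : 0 < cosTransform g 0)
    (x : E) : 0 < cosTransform g x := by
  set r : ℝ := 1 / √2
  have r_sq : r ^ 2 = 1 / 2 := by simp [r]
  have pos_of_pos_smul (y : E) (hy : 0 < cosTransform g (r • y)) : 0 < cosTransform g y := by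
    have hle := hg.sq_le y 0 (r • y) (by simp [norm_smul, mul_pow, r_sq])
    exact pos_of_mul_pos_left ((pow_pos hy 2).trans_le hle) h₀.le
  have pos_of_pos_pow_smul (n : ℕ) : 0 < cosTransform g (r ^ n • x) → 0 < cosTransform g x := by
    induction n with
    | zero => simp
    | succ n ih =>
      intro hn
      rw [pow_succ', mul_smul] at hn
      exact ih (pos_of_pos_smul _ hn)
  have pow_smul_tendsto : Tendsto (fun n : ℕ => r ^ n • x) atTop (𝓝 0) := by
    have hr : |r| < 1 := (sq_lt_one_iff_abs_lt_one r).1 (by norm_num [r_sq])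
    simpa using (tendsto_pow_atTop_nhds_zero_of_abs_lt_one hr).smul_const x
  have eventually_pos := (((continuous_cosTransform hg.integrable).tendsto 0).comp
    pow_smul_tendsto).eventually_const_lt h₀
  obtain ⟨n, hn⟩ := eventually_pos.exists
  exact pos_of_pos_pow_smul n hn

end HasLogConvexCosTransform

/-- A function, such as a positive combination of Gaussians, whose products with all centred
Gaussians have log-convex cosine transforms. The Gaussian factor provides the integrability that
the function itself (for instance the constant `1`) may lack. -/
def IsGaussianMultiplier (h : E → ℝ) : Prop :=
  ∀ ε : ℝ, 0 < ε → HasLogConvexCosTransform fun z => exp (-ε * ‖z‖ ^ 2) * h z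

namespace IsGaussianMultiplier

lemma one : IsGaussianMultiplier fun _ : E => (1 : ℝ) := fun ε hε => by
  simpa using HasLogConvexCosTransform.gaussian hε

lemma gaussian_mul {h : E → ℝ} (hh : IsGaussianMultiplier h) {δ : ℝ} (hδ : 0 ≤ δ) :
    IsGaussianMultiplier fun z => exp (-δ * ‖z‖ ^ 2) * h z := fun ε hε => by
  simpa only [← mul_assoc, ← exp_add, ← add_mul, ← neg_add] using hh (ε + δ) (by positivity)

lemma const_mul {h : E → ℝ} (hh : IsGaussianMultiplier h) {c : ℝ} (hc : 0 ≤ c) :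
    IsGaussianMultiplier fun z => c * h z := fun ε hε => by
  simpa only [mul_left_comm] using (hh ε hε).const_mul hc

lemma sum {ι : Type*} {s : Finset ι} {h : ι → E → ℝ} (hh : ∀ i ∈ s, IsGaussianMultiplier (h i)) :
    IsGaussianMultiplier fun z => ∑ i ∈ s, h i z := fun ε hε => by
  simpa only [Finset.mul_sum] using HasLogConvexCosTransform.sum fun i hi => hh i hi ε hε

lemma of_tendsto {h : ℕ → E → ℝ} {f : E → ℝ} {C : ℝ} (hh : ∀ n, IsGaussianMultiplier (h n))
    (hbound : ∀ n, ∀ᵐ z, ‖h n z‖ ≤ C)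
    (hlim : ∀ᵐ z, Tendsto (fun n => h n z) atTop (𝓝 (f z))) :
    IsGaussianMultiplier f := fun ε hε => by
  refine .of_tendsto (fun n => hh n ε hε)
    ((integrable_exp_neg_mul_norm_sq hε).mul_const C) (fun n => ?_)
    (hlim.mono fun z hz => hz.const_mul _)
  filter_upwards [hbound n] with z hz
  rw [norm_mul, norm_of_nonneg (exp_pos _).le]
  gcongr

lemma mul_of_hasSum {h f : E → ℝ} {c δ : ℕ → ℝ} {C : ℝ} (hh : IsGaussianMultiplier h)
    (hc : ∀ k, 0 ≤ c k) (hδ : ∀ k, 0 ≤ δ k)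
    (hf : ∀ᵐ z, HasSum (fun k => c k * exp (-δ k * ‖z‖ ^ 2)) (f z))
    (hbound : ∀ᵐ z, ‖f z * h z‖ ≤ C) :
    IsGaussianMultiplier fun z => f z * h z := by
  have term_nonneg (z : E) (k : ℕ) : 0 ≤ c k * exp (-δ k * ‖z‖ ^ 2) :=
    mul_nonneg (hc k) (exp_pos _).le
  have partial_sum (N : ℕ) : IsGaussianMultiplier fun z =>
      (∑ k ∈ Finset.range N, c k * exp (-δ k * ‖z‖ ^ 2)) * h z := by
    simpa only [Finset.sum_mul, mul_assoc] using
      IsGaussianMultiplier.sum fun k _ => (hh.gaussian_mul (hδ k)).const_mul (hc k)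
  refine .of_tendsto (C := C) partial_sum (fun N => ?_)
    (hf.mono fun z hz => hz.tendsto_sum_nat.mul_const _)
  filter_upwards [hf, hbound] with z hfz hCz
  refine le_trans ?_ hCz
  rw [norm_mul, norm_mul, norm_of_nonneg (Finset.sum_nonneg fun k _ => term_nonneg z k)]
  gcongr
  exact (sum_le_hasSum _ (fun k _ => term_nonneg z k) hfz).trans (le_norm_self _)

end IsGaussianMultiplier

variable [Nontrivial E]

lemma isGaussianMultiplier_sibuyaPGF_pow {b δ : ℝ} (hb₀ : 0 ≤ b) (hb₁ : b ≤ 1) (hδ : 0 < δ)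
    (n : ℕ) : IsGaussianMultiplier fun z : E => sibuyaPGF b (exp (-δ * ‖z‖ ^ 2)) ^ n := by
  induction n with
  | zero => simpa only [pow_zero] using IsGaussianMultiplier.one
  | succ n ih =>
    simp only [pow_succ' (sibuyaPGF _ _)]
    refine ih.mul_of_hasSum (δ := fun k => (k + 1) * δ) (C := 1)
      (neg_one_pow_mul_choose_succ_nonneg hb₀ hb₁) (fun k => by positivity) ?_
      (.of_forall fun z => ?_)
    · filter_upwards [volume.ae_ne (0 : E)] with z hz
      have hw : |exp (-δ * ‖z‖ ^ 2)| < 1 := by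
        rw [abs_exp, exp_lt_one_iff, neg_mul, neg_lt_zero]
        positivity
      convert hasSum_sibuyaPGF b hw using 3 with k
      rw [← exp_nat_mul]
      push_cast
      ring_nf
    · rw [← pow_succ']
      exact norm_sibuyaPGF_pow_le_one hb₀ (exp_pos _).le (exp_neg_mul_sq_le_one hδ.le ‖z‖) _

lemma isGaussianMultiplier_exp_neg_mul_norm_rpow {ν α : ℝ} (hν : 0 < ν) (hα₀ : 0 < α)
    (hα₂ : α ≤ 2) : IsGaussianMultiplier fun z : E => exp (-ν * ‖z‖ ^ α) := by
  have norm_sq_rpow (z : E) : (‖z‖ ^ 2) ^ (α / 2) = ‖z‖ ^ α := by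
    rw [← rpow_natCast_mul (norm_nonneg z)]
    congr 1
    push_cast
    ring
  set δ : ℕ → ℝ := fun n => (ν / n) ^ (1 / (α / 2))
  have δ_pos (n : ℕ) : 0 < δ (n + 1) := by positivity
  refine .of_tendsto (C := 1)
    (fun n => isGaussianMultiplier_sibuyaPGF_pow (b := α / 2) (by positivity) (by linarith)
      (δ_pos n) (n + 1))
    (fun n => .of_forall fun z => norm_sibuyaPGF_pow_le_one (by positivity) (exp_pos _).le
      (exp_neg_mul_sq_le_one (δ_pos n).le ‖z‖) _)
    (.of_forall fun z => ?_)
  simpa only [norm_sq_rpow, Function.comp_def] using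
    (tendsto_sibuyaPGF_exp_pow (half_pos hα₀) hν (sq_nonneg ‖z‖)).comp (tendsto_add_atTop_nat 1)

lemma hasLogConvexCosTransform_exp_neg_mul_norm_rpow {ν α : ℝ} (hν : 0 < ν) (hα₀ : 0 < α)
    (hα₂ : α ≤ 2) : HasLogConvexCosTransform fun z : E => exp (-ν * ‖z‖ ^ α) := by
  have ε_pos (n : ℕ) : 0 < 1 / ((n : ℝ) + 1) := by positivity
  refine .of_tendsto
    (fun n => isGaussianMultiplier_exp_neg_mul_norm_rpow hν hα₀ hα₂ _ (ε_pos n))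
    (integrable_exp_neg_mul_norm_rpow hν hα₀) (fun n => .of_forall fun z => ?_)
    (.of_forall fun z => ?_)
  · rw [norm_of_nonneg (by positivity)]
    exact mul_le_of_le_one_left (exp_pos _).le (exp_neg_mul_sq_le_one (ε_pos n).le ‖z‖)
  · have exponent_tendsto :=
      (tendsto_one_div_add_atTop_nhds_zero_nat (𝕜 := ℝ)).neg.mul_const (‖z‖ ^ 2)
    simpa using exponent_tendsto.rexp.mul_const (exp (-ν * ‖z‖ ^ α))

lemma cosTransform_exp_neg_mul_norm_rpow_pos {ν α : ℝ} (hν : 0 < ν) (hα₀ : 0 < α) (hα₂ : α ≤ 2)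
    (x : E) : 0 < cosTransform (fun z => exp (-ν * ‖z‖ ^ α)) x := by
  have hg := hasLogConvexCosTransform_exp_neg_mul_norm_rpow (E := E) hν hα₀ hα₂
  refine hg.cosTransform_pos ?_ x
  simpa [cosTransform] using integral_exp_pos hg.integrable

end

section

variable {d : ℕ} {ν α : ℝ}

lemma stableKernel_eq_cosTransform {t : ℝ} (ht : 0 < t * ν) (hα : 0 < α)
    (x : EuclideanSpace ℝ (Fin d)) :
    stableKernel d ν α t x =
      ((2 * π) ^ d)⁻¹ * cosTransform (fun z => exp (-(t * ν) * ‖z‖ ^ α)) x := by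
  have re_integrand (z : EuclideanSpace ℝ (Fin d)) :
      (Complex.exp (-(Complex.I * (⟪x, z⟫ : ℝ))) *
        Complex.exp (-((t * ν * ‖z‖ ^ α : ℝ) : ℂ))).re =
      cos ⟪x, z⟫ * exp (-(t * ν) * ‖z‖ ^ α) := by
    rw [← Complex.exp_add, Complex.exp_re]
    simp [-Complex.ofReal_mul, mul_comm]
  have hint : Integrable fun z : EuclideanSpace ℝ (Fin d) =>
      Complex.exp (-(Complex.I * (⟪x, z⟫ : ℝ))) *
        Complex.exp (-((t * ν * ‖z‖ ^ α : ℝ) : ℂ)) := by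
    refine (integrable_exp_neg_mul_norm_rpow ht hα).mono' (by fun_prop) (.of_forall fun z => ?_)
    rw [norm_mul, Complex.norm_exp, Complex.norm_exp]
    simp [-Complex.ofReal_mul]
  simp only [stableKernel, cosTransform, ← re_integrand]
  rw [← RCLike.re_to_complex, ← integral_re hint]
  simp only [RCLike.re_to_complex]

lemma continuous_stableKernel {t : ℝ} (ht : 0 < t * ν) (hα : 0 < α) :
    Continuous (stableKernel d ν α t) := by
  simp only [funext (stableKernel_eq_cosTransform (d := d) ht hα)]
  exact (continuous_cosTransform (integrable_exp_neg_mul_norm_rpow ht hα)).const_mul _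

lemma stableKernel_pos [NeZero d] {t : ℝ} (ht : 0 < t * ν) (hα₀ : 0 < α) (hα₂ : α ≤ 2)
    (x : EuclideanSpace ℝ (Fin d)) : 0 < stableKernel d ν α t x := by
  rw [stableKernel_eq_cosTransform ht hα₀]
  exact mul_pos (by positivity) (cosTransform_exp_neg_mul_norm_rpow_pos ht hα₀ hα₂ x)

lemma stableKernel_eq_rescale {s : ℝ} (hs : 0 < s) (hα : α ≠ 0) (x : EuclideanSpace ℝ (Fin d)) :
    stableKernel d ν α s x =
      ((s ^ (1 / α)) ^ d)⁻¹ * stableKernel d ν α 1 ((s ^ (1 / α))⁻¹ • x) := by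
  set ρ := s ^ (1 / α)
  have hρ : 0 < ρ := by positivity
  have hρα : ρ ^ α = s := by rw [← rpow_mul hs.le, one_div_mul_cancel hα, rpow_one]
  have change_of_variables := Measure.integral_comp_smul_of_nonneg volume
    (fun z : EuclideanSpace ℝ (Fin d) => Complex.exp (-(Complex.I * (⟪ρ⁻¹ • x, z⟫ : ℝ))) *
      Complex.exp (-((1 * ν * ‖z‖ ^ α : ℝ) : ℂ))) ρ (hR := hρ.le)
  have inner_smul_smul (z : EuclideanSpace ℝ (Fin d)) : ⟪ρ⁻¹ • x, ρ • z⟫ = ⟪x, z⟫ := by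
    rw [real_inner_smul_left, real_inner_smul_right, inv_mul_cancel_left₀ hρ.ne']
  have mul_norm_smul_rpow (z : EuclideanSpace ℝ (Fin d)) :
      1 * ν * ‖ρ • z‖ ^ α = s * ν * ‖z‖ ^ α := by
    rw [norm_smul, norm_of_nonneg hρ.le, mul_rpow hρ.le (norm_nonneg z), hρα]
    ring
  simp only [inner_smul_smul, mul_norm_smul_rpow, finrank_euclideanSpace_fin] at change_of_variables
  rw [stableKernel, stableKernel, change_of_variables, Complex.smul_re, smul_eq_mul, mul_left_comm]

end

section

open Metric

variable {F : Type*} [NormedAddCommGroup F] [NormedSpace ℝ F] [FiniteDimensional ℝ F]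
  [MeasurableSpace F] [BorelSpace F] (μ : Measure F) [μ.IsAddHaarMeasure]

lemma exists_pos_le_setIntegral_ball_rescale {p : F → ℝ} (hp : Continuous p) (hpos : ∀ x, 0 < p x)
    {K : ℝ} (hK : 0 ≤ K) :
    ∃ c : ℝ, 0 < c ∧ ∀ (ρ R : ℝ) (a x : F), 0 < ρ → ρ ≤ R → dist x a ≤ R + K * ρ →
      c ≤ ∫ y in ball a R, (ρ ^ Module.finrank ℝ F)⁻¹ * p (ρ⁻¹ • (x - y)) ∂μ := by
  obtain ⟨x₀, -, hmin⟩ := (isCompact_closedBall (0 : F) (K + 2)).exists_isMinOn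
    (nonempty_closedBall.2 (by positivity)) hp.continuousOn
  refine ⟨p x₀ * μ.real (ball 0 1),
    mul_pos (hpos x₀) ?_, fun ρ R a x hρ hρR hx => ?_⟩
  · exact ENNReal.toReal_pos (measure_ball_pos μ _ one_pos).ne' measure_ball_lt_top.ne
  obtain ⟨w, hxw, hwa⟩ : ∃ w, dist x w ≤ (K + 1) * ρ ∧ dist w a ≤ R - ρ :=
    exists_dist_le_le (by positivity) (sub_nonneg.2 hρR) (by linarith)
  have ball_subset : ball w ρ ⊆ ball a R := ball_subset_ball' (by linarith)
  have hint : IntegrableOn (fun y => (ρ ^ Module.finrank ℝ F)⁻¹ * p (ρ⁻¹ • (x - y))) (ball a R) μ :=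
    ((by fun_prop : Continuous _).continuousOn.integrableOn_compact
      (isCompact_closedBall a R)).mono_set ball_subset_closedBall
  have le_kernel : ∀ y ∈ ball w ρ, (ρ ^ Module.finrank ℝ F)⁻¹ * p x₀ ≤
      (ρ ^ Module.finrank ℝ F)⁻¹ * p (ρ⁻¹ • (x - y)) := by
    intro y hy
    gcongr
    refine hmin ?_
    rw [mem_closedBall_zero_iff, norm_smul, norm_inv, norm_of_nonneg hρ.le, inv_mul_le_iff₀ hρ,
      ← dist_eq_norm]
    linarith [dist_triangle x w y, mem_ball'.1 hy]
  calc p x₀ * μ.real (ball 0 1)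
      = (ρ ^ Module.finrank ℝ F)⁻¹ * p x₀ * μ.real (ball w ρ) := by
        rw [measureReal_def μ (ball w ρ), μ.addHaar_ball_of_pos w hρ, ENNReal.toReal_mul,
          ENNReal.toReal_ofReal (by positivity), ← measureReal_def]
        field_simp
    _ ≤ ∫ y in ball w ρ, (ρ ^ Module.finrank ℝ F)⁻¹ * p (ρ⁻¹ • (x - y)) ∂μ :=
        setIntegral_ge_of_const_le_real measurableSet_ball measure_ball_lt_top.ne le_kernel
          (hint.mono_set ball_subset)
    _ ≤ _ := setIntegral_mono_set hint
        (.of_forall fun y => mul_nonneg (by positivity) (hpos _).le) ball_subset.eventuallyLE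

end

/-- Proposition 5.1: for `M > 0` and `R > 0` there is `0 < c_R < 1` (independent of `t`
and `m`) such that for every `t > 0` there is `m₀ > 1` with
`∫_{B(0,R)} p_s(x-y) dy ≥ c_R` for all `m ≥ m₀`, all `t/(2m) ≤ s ≤ t/m` and all
`x ∈ B(0, R + M(t/m)^{1/α})`. -/
theorem ball_mass_lower_bound (d : ℕ) (hd : 1 ≤ d) (ν α : ℝ) (hν : 0 < ν)
    (hα : 0 < α) (hα2 : α ≤ 2) (M : ℝ) (hM : 0 < M) (R : ℝ) (hR : 0 < R) :
    ∃ c : ℝ, 0 < c ∧ c < 1 ∧ ∀ t : ℝ, 0 < t → ∃ m₀ : ℝ, 1 < m₀ ∧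
      ∀ m : ℝ, m₀ ≤ m → ∀ (s : ℝ) (x : EuclideanSpace ℝ (Fin d)),
        t / (2 * m) ≤ s → s ≤ t / m → ‖x‖ < R + M * (t / m) ^ (1 / α) →
        c ≤ ∫ y in Metric.ball (0 : EuclideanSpace ℝ (Fin d)) R,
              stableKernel d ν α s (x - y) := by
  have : NeZero d := ⟨Nat.one_le_iff_ne_zero.1 hd⟩
  obtain ⟨c, hc, hle⟩ := exists_pos_le_setIntegral_ball_rescale volume
    (continuous_stableKernel (d := d) (by simpa using hν) hα)
    (stableKernel_pos (t := 1) (by simpa using hν) hα hα2)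
    (K := M * 2 ^ (1 / α)) (by positivity)
  refine ⟨min c (1 / 2), by positivity, (min_le_right _ _).trans_lt (by norm_num), fun t ht =>
    ⟨max 2 (t / R ^ α), one_lt_two.trans_le (le_max_left _ _), fun m hm s x hs₁ hs₂ hx => ?_⟩⟩
  have hm₀ : 0 < m := two_pos.trans_le ((le_max_left _ _).trans hm)
  have hs : 0 < s := (by positivity : 0 < t / (2 * m)).trans_le hs₁
  have hsR : s ^ (1 / α) ≤ R := by
    rw [one_div, rpow_inv_le_iff_of_pos hs.le hR.le hα]
    exact hs₂.trans ((div_le_comm₀ (by positivity) hm₀).1 ((le_max_right _ _).trans hm))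
  have htm : (t / m) ^ (1 / α) ≤ 2 ^ (1 / α) * s ^ (1 / α) := by
    rw [← mul_rpow two_pos.le hs.le]
    gcongr
    linarith [show t / m = 2 * (t / (2 * m)) by field_simp]
  have hxR : dist x 0 ≤ R + M * 2 ^ (1 / α) * s ^ (1 / α) := by
    rw [dist_zero_right, mul_assoc]
    exact hx.le.trans (by gcongr)
  simpa only [stableKernel_eq_rescale hs hα.ne', finrank_euclideanSpace_fin] using
    (min_le_left c (1 / 2)).trans (hle _ R 0 x (by positivity) hsR hxR)
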